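/- Let R be an orthogonally convex rectangle complex, let C be a cell of R, and let d be one of the four axis directions. Then C is d-extensible (i.e., there exists a rectangular extension of R in which the d-side of C lies on the boundary of the extension) if and only if no cell of R is adjacent to C on the d-side of C. -/

import Mathlib

open scoped BigOperators

/-- An axis-aligned closed rectangle with positive width and height. -/
structure Rect where
  x1 : ℝ
  x2 : ℝ
  y1 : ℝ
  y2 : ℝ
  hx : x1 < x2
  hy : y1 < y2

namespace Rect

/-- The closed rectangle as a set of points of the plane. -/
def toSet (R : Rect) : Set (ℝ × ℝ) :=
  {p | R.x1 ≤ p.1 ∧ p.1 ≤ R.x2 ∧ R.y1 ≤ p.2 ∧ p.2 ≤ R.y2}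

/-- The open interior of the rectangle. -/
def inter (R : Rect) : Set (ℝ × ℝ) :=
  {p | R.x1 < p.1 ∧ p.1 < R.x2 ∧ R.y1 < p.2 ∧ p.2 < R.y2}

end Rect

/-- The four cardinal directions. -/
inductive Dir : Type
  | left | right | top | bottom
deriving DecidableEq, Repr

/-- The direction opposite to a given direction. -/
def Dir.neg : Dir → Dir
  | .left => .right
  | .right => .left
  | .top => .bottom
  | .bottom => .top

/-- `R.adjTo S d` : rectangle `S` lies in direction `d` of rectangle `R`, the two sharing a
boundary segment of positive length (adjacency with orientation `d`). -/
def Rect.adjTo (R S : Rect) : Dir → Prop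
  | .right  => R.x2 = S.x1 ∧ max R.y1 S.y1 < min R.y2 S.y2
  | .left   => S.x2 = R.x1 ∧ max R.y1 S.y1 < min R.y2 S.y2
  | .top    => R.y2 = S.y1 ∧ max R.x1 S.x1 < min R.x2 S.x2
  | .bottom => S.y2 = R.y1 ∧ max R.x1 S.x1 < min R.x2 S.x2

/-- A rectangle complex: a finite family of axis-aligned rectangles with pairwise disjoint
interiors such that any two rectangles are either completely disjoint or share a boundary
segment of positive length (in particular, no two rectangles meet in just a single point). -/
structure RectComplex (ι : Type) [Fintype ι] where
  cell : ι → Rect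
  disjInt : ∀ i j : ι, i ≠ j → Disjoint (cell i).inter (cell j).inter
  meet : ∀ i j : ι, i ≠ j →
    Disjoint (cell i).toSet (cell j).toSet ∨ ∃ d : Dir, (cell i).adjTo (cell j) d

namespace RectComplex

variable {ι : Type} [Fintype ι]

/-- The union of all cells of the complex. -/
def union (C : RectComplex ι) : Set (ℝ × ℝ) := ⋃ i : ι, (C.cell i).toSet

/-- The complex is rectangular if its union is a rectangle. -/
def IsRectangular (C : RectComplex ι) : Prop := ∃ R : Rect, C.union = R.toSet

/-- `C'.Extends C` : the complex `C'`, on the same index set (this indexing provides the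
bijection between the cells), preserves all adjacencies of `C` together with their
orientations.  (`C'` may have additional adjacencies.) -/
def Extends (C' C : RectComplex ι) : Prop :=
  ∀ i j : ι, ∀ d : Dir, (C.cell i).adjTo (C.cell j) d → (C'.cell i).adjTo (C'.cell j) d

/-- `C'` is a rectangular extension of `C`. -/
def IsRectExtension (C' C : RectComplex ι) : Prop :=
  C'.Extends C ∧ C'.IsRectangular

/-- Cell `i` is extreme in direction `d` with respect to the complex `C`: some point of the
cell is at least as far in direction `d` as every point of `C`. -/
def Extreme (C : RectComplex ι) (i : ι) : Dir → Prop
  | .right  => ∀ j : ι, (C.cell j).x2 ≤ (C.cell i).x2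
  | .left   => ∀ j : ι, (C.cell i).x1 ≤ (C.cell j).x1
  | .top    => ∀ j : ι, (C.cell j).y2 ≤ (C.cell i).y2
  | .bottom => ∀ j : ι, (C.cell i).y1 ≤ (C.cell j).y1

/-- Cell `i` is `d`-extensible: some rectangular extension of `C` makes it extreme in
direction `d` (its `d`-side then lies on the boundary of the extension). -/
def Extensible (C : RectComplex ι) (i : ι) (d : Dir) : Prop :=
  ∃ C' : RectComplex ι, C'.IsRectExtension C ∧ C'.Extreme i d

/-- The complex is orthogonally convex: every horizontal and every vertical line meets its
union in an order-connected (hence empty or a single segment) set. -/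
def OrthoConvex (C : RectComplex ι) : Prop :=
  (∀ y : ℝ, {x : ℝ | (x, y) ∈ C.union}.OrdConnected) ∧
  (∀ x : ℝ, {y : ℝ | (x, y) ∈ C.union}.OrdConnected)

end RectComplex

/-!
A neighbor on the `d`-side of a cell reaches further in direction `d` and survives in every
extension, so only a cell whose `d`-side is free can be extreme.

Conversely, fix a direction `e` perpendicular to `d`. Where the side of a cell `p` facing `e` is
free and a neighbor `q` on its left or right, seen along `e`, reaches further in direction `e`, the
outline has a notch. Fill it by raising `p` to the level of `q`; a cell standing on `q` flush with
that corner is prolonged over `p`, for otherwise the two would meet in a single point. Filling keeps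
orthogonal convexity, the adjacencies and the free sides perpendicular to `e`, and introduces no new
side coordinates. Hence a maximal filling exists, and it has no notch towards `e` or `e.neg`.

Without notches, a cell that attains the maximum in direction `d` over a row has a free `d`-side,
and likewise for `d.neg`. So after all free sides perpendicular to `e` are moved out to the bounding
box, every row that meets a cell spans the box. The remaining rows are covered by raising the side
of each cell facing `e` to the next level where a cell begins. The result is a rectangle in which
every cell with a free `d`-side is extreme.
-/

/-! ### Frames and sides -/

namespace Dir

/-- Two directions are perpendicular. A perpendicular pair `d`, `e` serves as a frame of the plane,
with `d` and `e` pointing along the two coordinate axes. -/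
def Perp (d e : Dir) : Prop := d ≠ e ∧ d ≠ e.neg

variable {d e : Dir}

@[simp] theorem neg_neg (d : Dir) : d.neg.neg = d := by cases d <;> rfl

theorem neg_ne (d : Dir) : d.neg ≠ d := by cases d <;> decide

theorem exists_perp (d : Dir) : ∃ e, Perp d e := by
  cases d
  exacts [⟨.top, by decide, by decide⟩, ⟨.top, by decide, by decide⟩,
    ⟨.right, by decide, by decide⟩, ⟨.right, by decide, by decide⟩]

theorem Perp.symm (h : Perp d e) : Perp e d :=
  ⟨h.1.symm, fun he => h.2 (by rw [he, neg_neg])⟩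

theorem Perp.neg_right (h : Perp d e) : Perp d e.neg := ⟨h.2, by rw [neg_neg]; exact h.1⟩

theorem Perp.neg_left (h : Perp d e) : Perp d.neg e := h.symm.neg_right.symm

theorem Perp.eq_or (h : Perp d e) (g : Dir) : g = d ∨ g = d.neg ∨ g = e ∨ g = e.neg := by
  obtain ⟨h₁, h₂⟩ := h
  cases d <;> cases e <;> cases g <;> simp_all [neg]

theorem Perp.eq_or_eq_neg {g : Dir} (h : Perp d e) (hg : Perp g e) : g = d ∨ g = d.neg := by
  rcases h.eq_or g with rfl | rfl | rfl | rfl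
  exacts [.inl rfl, .inr rfl, absurd rfl hg.1, absurd rfl hg.2]

@[elab_as_elim]
theorem Perp.induction {P : Dir → Dir → Prop} (base : P .right .top)
    (neg : ∀ d e, P d e → P d.neg e) (swap : ∀ d e, P d e → P e d) (h : Perp d e) : P d e := by
  have hleft : ∀ d, d = .left ∨ d = .right → P d .top := by
    rintro _ (rfl | rfl)
    exacts [neg _ _ base, base]
  have hboth : ∀ d, d = .left ∨ d = .right → P d .bottom := fun d hd =>
    swap _ _ (neg _ _ (swap _ _ (hleft d hd)))
  obtain ⟨h₁, h₂⟩ := h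
  cases d <;> cases e <;> first
    | exact absurd rfl h₁
    | exact absurd rfl h₂
    | exact hleft _ (by simp)
    | exact hboth _ (by simp)
    | exact swap _ _ (hleft _ (by simp))
    | exact swap _ _ (hboth _ (by simp))

end Dir

namespace Rect

/-- The coordinate of the `d`-side, measured along an axis oriented in direction `d`. -/
def hi (R : Rect) : Dir → ℝ
  | .left => -R.x1
  | .right => R.x2
  | .top => R.y2
  | .bottom => -R.y1

/-- The coordinate of the side opposite to the `d`-side, measured along an axis oriented in
direction `d`. -/
def lo (R : Rect) (d : Dir) : ℝ := -R.hi d.neg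

/-- The projection of a rectangle to an axis oriented in direction `d`. -/
def span (R : Rect) (d : Dir) : Set ℝ := Set.Icc (R.lo d) (R.hi d)

/-- Adjacency in some direction. -/
def Adj (R S : Rect) : Prop := ∃ d, R.adjTo S d

variable {R S : Rect} {d e : Dir}

@[simp] theorem lo_neg (R : Rect) (d : Dir) : R.lo d.neg = -R.hi d := by rw [lo, Dir.neg_neg]

@[simp] theorem hi_neg (R : Rect) (d : Dir) : R.hi d.neg = -R.lo d := (neg_neg _).symm

theorem lo_lt_hi (R : Rect) (d : Dir) : R.lo d < R.hi d := by
  have := R.hx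
  have := R.hy
  cases d <;> simpa [lo, hi, Dir.neg]

/-- The rectangle containing `R` whose `d`-side is moved outwards to the coordinate `f d`, for every
direction `d`. -/
def grow (R : Rect) (f : Dir → ℝ) (hf : ∀ d, R.hi d ≤ f d) : Rect where
  x1 := -f .left
  x2 := f .right
  y1 := -f .bottom
  y2 := f .top
  hx := by linarith [R.hx, show -R.x1 ≤ f .left from hf .left, show R.x2 ≤ f .right from hf .right]
  hy := by linarith [R.hy, show -R.y1 ≤ f .bottom from hf .bottom, show R.y2 ≤ f .top from hf .top]

theorem hi_grow (f : Dir → ℝ) (hf : ∀ d, R.hi d ≤ f d) : (R.grow f hf).hi d = f d := by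
  cases d <;> simp [grow, hi]

theorem lo_grow (f : Dir → ℝ) (hf : ∀ d, R.hi d ≤ f d) : (R.grow f hf).lo d = -f d.neg := by
  rw [lo, hi_grow]

theorem grow_eq_self {f : Dir → ℝ} {hf : ∀ d, R.hi d ≤ f d} (h : ∀ d, f d = R.hi d) :
    R.grow f hf = R := by
  cases R
  simp [grow, hi, h]

theorem mem_span_neg {s : ℝ} : s ∈ R.span d.neg ↔ -s ∈ R.span d := by
  simp only [span, Set.mem_Icc, lo_neg, hi_neg]
  constructor <;> rintro ⟨h₁, h₂⟩ <;> constructor <;> linarith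

theorem hi_mem_span (R : Rect) (d : Dir) : R.hi d ∈ R.span d := ⟨(R.lo_lt_hi d).le, le_rfl⟩

theorem lo_mem_span (R : Rect) (d : Dir) : R.lo d ∈ R.span d := ⟨le_rfl, (R.lo_lt_hi d).le⟩

theorem mk_mem_toSet {x y : ℝ} : (x, y) ∈ R.toSet ↔ x ∈ R.span .right ∧ y ∈ R.span .top := by
  simp [toSet, span, lo, hi, Dir.neg, and_assoc]

theorem toSet_inter_nonempty_iff (h : d.Perp e) : (R.toSet ∩ S.toSet).Nonempty ↔
    (R.lo d ≤ S.hi d ∧ S.lo d ≤ R.hi d) ∧ R.lo e ≤ S.hi e ∧ S.lo e ≤ R.hi e := by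
  refine Dir.Perp.induction ?_ (fun d e ih => ?_) (fun d e ih => ?_) h
  · have hR := R.lo_lt_hi
    have hS := S.lo_lt_hi
    constructor
    · rintro ⟨⟨x, y⟩, hzR, hzS⟩
      obtain ⟨⟨_, _⟩, _, _⟩ := mk_mem_toSet.1 hzR
      obtain ⟨⟨_, _⟩, _, _⟩ := mk_mem_toSet.1 hzS
      refine ⟨⟨?_, ?_⟩, ?_, ?_⟩ <;> linarith
    · rintro ⟨⟨h₁, h₂⟩, h₃, h₄⟩
      refine ⟨(max (R.lo .right) (S.lo .right), max (R.lo .top) (S.lo .top)),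
        mk_mem_toSet.2 ⟨⟨?_, ?_⟩, ?_, ?_⟩, mk_mem_toSet.2 ⟨⟨?_, ?_⟩, ?_, ?_⟩⟩ <;>
      simp [h₁, h₂, h₃, h₄, (hR _).le, (hS _).le]
  · simpa only [lo_neg, hi_neg, neg_le_neg_iff, and_comm, and_left_comm] using ih
  · rw [ih, and_comm]

theorem adjTo_iff (h : d.Perp e) :
    R.adjTo S d ↔ R.hi d = S.lo d ∧ R.lo e < S.hi e ∧ S.lo e < R.hi e := by
  have := R.hx
  have := R.hy
  have := S.hx
  have := S.hy
  obtain ⟨h₁, h₂⟩ := h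
  cases d <;> cases e <;> simp_all [adjTo, hi, lo, Dir.neg] <;> grind

theorem adjTo_neg (R S : Rect) (d : Dir) : R.adjTo S d.neg ↔ S.adjTo R d := by
  obtain ⟨e, h⟩ := d.exists_perp
  rw [adjTo_iff h, adjTo_iff h.neg_left, hi_neg, lo_neg, neg_inj, eq_comm, and_comm (a := _ < _)]

theorem adj_iff (h : d.Perp e) :
    R.Adj S ↔ R.adjTo S d ∨ S.adjTo R d ∨ R.adjTo S e ∨ S.adjTo R e := by
  simp only [← adjTo_neg R S]
  constructor
  · rintro ⟨g, hg⟩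
    rcases h.eq_or g with rfl | rfl | rfl | rfl <;> simp [hg]
  · rintro (hg | hg | hg | hg) <;> exact ⟨_, hg⟩

theorem Adj.symm : R.Adj S → S.Adj R := fun ⟨d, h⟩ => ⟨d.neg, (adjTo_neg S R d).2 h⟩

theorem Adj.disjoint_inter (h : R.Adj S) : Disjoint R.inter S.inter := by
  rw [Set.disjoint_left]
  rintro ⟨x, y⟩ ⟨_, _, _, _⟩ ⟨_, _, _, _⟩
  obtain ⟨d, h⟩ := h
  cases d <;> have := h.1 <;> linarith

theorem inter_subset_toSet (R : Rect) : R.inter ⊆ R.toSet :=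
  fun _ ⟨h₁, h₂, h₃, h₄⟩ => ⟨h₁.le, h₂.le, h₃.le, h₄.le⟩

end Rect

/-- A planar relation all of whose rows and columns are order-connected. -/
def BiConvex (U : ℝ → ℝ → Prop) : Prop :=
  (∀ t, {s | U s t}.OrdConnected) ∧ ∀ s, {t | U s t}.OrdConnected

theorem BiConvex.glue {U : ℝ → ℝ → Prop} (hU : BiConvex U) {a b u v : ℝ}
    (hcol : ∀ t ∈ Set.Icc u v, U b t) (hrow : ∀ s ∈ Set.Icc a b, U s u) :
    BiConvex fun s t => U s t ∨ s ∈ Set.Icc a b ∧ t ∈ Set.Icc u v := by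
  have key : ∀ {A : Set ℝ} {P : Prop} {x y z : ℝ}, A.OrdConnected → z = x ∨ z = y → (P → z ∈ A) →
      {t | t ∈ A ∨ P ∧ t ∈ Set.Icc x y}.OrdConnected := by
    intro A P x y z hA hz hPz
    by_cases hP : P ∧ x ≤ y
    · have hzI : z ∈ Set.Icc x y := by grind
      have hunion : (A ∪ Set.Icc x y).OrdConnected :=
        (hA.isPreconnected.union z (hPz hP.1) hzI isPreconnected_Icc).ordConnected
      convert hunion using 1
      grind
    · convert hA using 1
      grind
  refine ⟨fun t => ?_, fun s => key (hU.2 s) (.inl rfl) (hrow s)⟩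
  simpa only [and_comm, Set.mem_ofPred_eq] using key (hU.1 t) (x := a) (.inr rfl) (hcol t)

namespace RectComplex

variable {ι : Type} [Fintype ι] {C C' : RectComplex ι} {d e : Dir} {i j k : ι} {s t w : ℝ}

/-- The complex with the given cells; disjointness of interiors comes for free. -/
def ofTouching (cell : ι → Rect) (h : ∀ j k, j ≠ k →
    ((cell j).toSet ∩ (cell k).toSet).Nonempty → (cell j).Adj (cell k)) : RectComplex ι where
  cell := cell
  disjInt j k hjk := by
    by_cases hd : Disjoint (cell j).toSet (cell k).toSet
    · exact hd.mono (cell j).inter_subset_toSet (cell k).inter_subset_toSet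
    · exact (h j k hjk (Set.not_disjoint_iff_nonempty_inter.1 hd)).disjoint_inter
  meet j k hjk := by
    by_cases hd : Disjoint (cell j).toSet (cell k).toSet
    · exact .inl hd
    · exact .inr (h j k hjk (Set.not_disjoint_iff_nonempty_inter.1 hd))

/-- Cell `j` has no neighbor on its `d`-side. -/
def Free (C : RectComplex ι) (j : ι) (d : Dir) : Prop := ∀ k, ¬ (C.cell j).adjTo (C.cell k) d

/-- The union of the complex in the coordinates of the frame `(d, e)`. -/
def Covers (C : RectComplex ι) (d e : Dir) (s t : ℝ) : Prop :=
  ∃ j, s ∈ (C.cell j).span d ∧ t ∈ (C.cell j).span e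

theorem adj_of_touch (C : RectComplex ι) (h : d.Perp e) (hjk : j ≠ k)
    (h₁ : (C.cell j).lo d ≤ (C.cell k).hi d) (h₂ : (C.cell k).lo d ≤ (C.cell j).hi d)
    (h₃ : (C.cell j).lo e ≤ (C.cell k).hi e) (h₄ : (C.cell k).lo e ≤ (C.cell j).hi e) :
    (C.cell j).Adj (C.cell k) :=
  (C.meet j k hjk).resolve_left <| Set.not_disjoint_iff_nonempty_inter.2 <|
    (Rect.toSet_inter_nonempty_iff h).2 ⟨⟨h₁, h₂⟩, h₃, h₄⟩

theorem separated (C : RectComplex ι) (h : d.Perp e) (hjk : j ≠ k) :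
    (C.cell j).hi d ≤ (C.cell k).lo d ∨ (C.cell k).hi d ≤ (C.cell j).lo d ∨
      (C.cell j).hi e ≤ (C.cell k).lo e ∨ (C.cell k).hi e ≤ (C.cell j).lo e := by
  by_contra! hc
  have hadj := C.adj_of_touch h hjk hc.2.1.le hc.1.le hc.2.2.2.le hc.2.2.1.le
  rw [Rect.adj_iff h, Rect.adjTo_iff h, Rect.adjTo_iff h, Rect.adjTo_iff h.symm,
    Rect.adjTo_iff h.symm] at hadj
  grind

theorem ne_of_adjTo (h : (C.cell j).adjTo (C.cell k) d) : j ≠ k := by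
  rintro rfl
  obtain ⟨e, he⟩ := d.exists_perp
  exact ((C.cell j).lo_lt_hi d).ne' ((Rect.adjTo_iff he).1 h).1

theorem covers_neg_left : C.Covers d.neg e s t ↔ C.Covers d e (-s) t := by
  simp only [Covers, Rect.mem_span_neg]

theorem covers_swap : C.Covers e d t s ↔ C.Covers d e s t := by
  simp only [Covers, and_comm]

theorem mk_mem_union {x y : ℝ} : (x, y) ∈ C.union ↔ C.Covers .right .top x y := by
  simp only [union, Covers, Set.mem_iUnion, Rect.mk_mem_toSet]

theorem orthoConvex_iff (h : d.Perp e) : C.OrthoConvex ↔ BiConvex (C.Covers d e) := by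
  refine Dir.Perp.induction ?_ (fun d e ih => ?_) (fun d e ih => ?_) h
  · simp only [OrthoConvex, BiConvex, mk_mem_union]
  · have hneg : ∀ S : Set ℝ, (Neg.neg ⁻¹' S).OrdConnected ↔ S.OrdConnected := fun S =>
      ⟨fun hS => by simpa using hS.preimage_anti (f := Neg.neg) fun _ _ => neg_le_neg,
        fun hS => hS.preimage_anti fun _ _ => neg_le_neg⟩
    rw [ih]
    simp only [BiConvex, covers_neg_left]
    exact and_congr (forall_congr' fun t => (hneg {s | C.Covers d e s t}).symm)
      ((Equiv.neg ℝ).forall_congr_left.trans (by simp))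
  · rw [ih, BiConvex, BiConvex, and_comm]
    simp only [covers_swap]

theorem union_eq_of_covers_iff (h : d.Perp e) {R : Rect}
    (hR : ∀ s t, C.Covers d e s t ↔ s ∈ R.span d ∧ t ∈ R.span e) : C.union = R.toSet := by
  revert hR
  refine Dir.Perp.induction (fun hR => ?_) (fun d e ih hR => ?_) (fun d e ih hR => ?_) h
  · ext ⟨x, y⟩
    rw [mk_mem_union, Rect.mk_mem_toSet, hR]
  · refine ih fun s t => ?_
    rw [← neg_neg s, ← covers_neg_left, hR, Rect.mem_span_neg]
  · exact ih fun s t => by rw [← covers_swap, hR, and_comm]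

theorem extreme_iff : C.Extreme i d ↔ ∀ j, (C.cell j).hi d ≤ (C.cell i).hi d := by
  cases d <;> simp [Extreme, Rect.hi]

theorem extends_of_hi_le (hle : ∀ j g, (C.cell j).hi g ≤ (C'.cell j).hi g)
    (heq : ∀ j g, ¬ C.Free j g → (C'.cell j).hi g = (C.cell j).hi g) : C'.Extends C := by
  intro j k d hjk
  obtain ⟨e, h⟩ := d.exists_perp
  have hj := heq j d fun hfree => hfree k hjk
  have hk := heq k d.neg fun hfree => hfree j ((Rect.adjTo_neg _ _ d).2 hjk)
  rw [Rect.hi_neg, Rect.hi_neg, neg_inj] at hk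
  obtain ⟨h₁, h₂, h₃⟩ := (Rect.adjTo_iff h).1 hjk
  have hlo : ∀ l, (C'.cell l).lo e ≤ (C.cell l).lo e := fun l => neg_le_neg (hle l e.neg)
  exact (Rect.adjTo_iff h).2 ⟨by rw [hj, hk, h₁], (hlo j).trans_lt (h₂.trans_le (hle k e)),
    (hlo k).trans_lt (h₃.trans_le (hle j e))⟩

theorem OrthoConvex.exists_neighbor (hC : C.OrthoConvex) (h : d.Perp e)
    (hlo : (C.cell j).lo e < t) (hhi : t < (C.cell j).hi e) (hw : (C.cell j).hi d < w)
    (hwt : C.Covers d e w t) : ∃ k, (C.cell j).adjTo (C.cell k) d ∧ t ∈ (C.cell k).span e := by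
  let K : Set ι := {k | t ∈ (C.cell k).span e ∧ (C.cell j).hi d < (C.cell k).hi d}
  have hK : K.Nonempty := let ⟨l, hl, hlt⟩ := hwt; ⟨l, hlt, hw.trans_le hl.2⟩
  obtain ⟨k, ⟨hkt, hjk⟩, hmin⟩ := K.exists_min_image (fun k => (C.cell k).lo d) K.toFinite hK
  refine ⟨k, ?_, hkt⟩
  have hle : (C.cell k).lo d ≤ (C.cell j).hi d := by
    by_contra! hlt
    obtain ⟨m, hjm, hmk⟩ := exists_between hlt
    have hkd : C.Covers d e ((C.cell k).lo d) t := ⟨k, (C.cell k).lo_mem_span d, hkt⟩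
    have hjd : C.Covers d e ((C.cell j).hi d) t := ⟨j, (C.cell j).hi_mem_span d, hlo.le, hhi.le⟩
    obtain ⟨l, hlm, hlt⟩ := (((orthoConvex_iff h).1 hC).1 t).out hjd hkd ⟨hjm.le, hmk.le⟩
    exact (hmin l ⟨hlt, hjm.trans_le hlm.2⟩).not_gt (hlm.1.trans_lt hmk)
  have hadj := C.adj_of_touch h (fun hjk' : j = k => hjk.ne (by rw [hjk']))
    (((C.cell j).lo_lt_hi d).trans hjk).le hle (hlo.le.trans hkt.2) (hkt.1.trans hhi.le)
  rcases (Rect.adj_iff h).1 hadj with ha | ha | ha | ha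
  · exact ha
  · exact absurd ((Rect.adjTo_iff h).1 ha).1 (((C.cell j).lo_lt_hi d).trans hjk).ne'
  · exact absurd ((Rect.adjTo_iff h.symm).1 ha).1 (hkt.1.trans_lt hhi).ne'
  · exact absurd ((Rect.adjTo_iff h.symm).1 ha).1 (hlo.trans_le hkt.2).ne'

/-! ### Filling notches -/

theorem OrthoConvex.hi_le_or_lt_lo (hC : C.OrthoConvex) (h : d.Perp e) (hj : C.Free j e) {c : ℝ}
    (hc : (C.cell j).hi e < c)
    (hside : ∀ t ∈ Set.Icc ((C.cell j).hi e) c, C.Covers d e ((C.cell j).hi d) t)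
    (hk : (C.cell k).lo d < (C.cell j).hi d) :
    (C.cell k).hi e ≤ (C.cell j).hi e ∨ c < (C.cell k).lo e := by
  by_contra! hjk
  obtain ⟨s, hs, hsj⟩ := exists_between (max_lt ((C.cell j).lo_lt_hi d) hk)
  let t := min c ((C.cell k).hi e)
  have ht : (C.cell j).hi e < t := lt_min hc hjk.1
  have hkt : C.Covers d e ((C.cell k).lo d) t :=
    ⟨k, (C.cell k).lo_mem_span d, le_min hjk.2 ((C.cell k).lo_lt_hi e).le, min_le_right _ _⟩
  have hst : C.Covers d e s t := (((orthoConvex_iff h).1 hC).1 t).out hkt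
    (hside t ⟨ht.le, min_le_left _ _⟩) ⟨(le_max_right _ _).trans hs.le, hsj.le⟩
  obtain ⟨l, hl, -⟩ := hC.exists_neighbor h.symm ((le_max_left _ _).trans_lt hs) hsj ht
    (covers_swap.2 hst)
  exact hj l hl

variable {p q r : ι}

/-- A notch in the outline of the complex: the side of `p` facing `e` is free, but the
`d`-neighbor `q` of `p` reaches further in direction `e`. -/
structure Notch (C : RectComplex ι) (d e : Dir) (p q : ι) : Prop where
  perp : d.Perp e
  free : C.Free p e
  adjTo : (C.cell p).adjTo (C.cell q) d
  hi_lt_hi : (C.cell p).hi e < (C.cell q).hi e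

/-- The cell `r` stands on the corner of `q` up to which a notch at `p` and `q` is filled. -/
def Flush (C : RectComplex ι) (d e : Dir) (p q r : ι) : Prop :=
  (C.cell r).lo d = (C.cell p).hi d ∧ (C.cell r).lo e = (C.cell q).hi e

theorem Flush.eq (h : d.Perp e) (hj : C.Flush d e p q j) (hk : C.Flush d e p q k) : j = k := by
  by_contra hjk
  have := C.separated h hjk
  have := (C.cell j).lo_lt_hi
  have := (C.cell k).lo_lt_hi
  grind [Flush]

theorem not_flush_self : ¬ C.Flush d e p q p := fun hp => ((C.cell p).lo_lt_hi d).ne hp.1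

namespace Notch

theorem lo_eq (N : C.Notch d e p q) : (C.cell q).lo d = (C.cell p).hi d :=
  ((Rect.adjTo_iff N.perp).1 N.adjTo).1.symm

theorem lo_lt_hi (N : C.Notch d e p q) : (C.cell q).lo e < (C.cell p).hi e :=
  ((Rect.adjTo_iff N.perp).1 N.adjTo).2.2

theorem exists_cap (N : C.Notch d e p q) : ∃ c, (C.cell q).hi e ≤ c ∧
    (∀ r, C.Flush d e p q r → (C.cell r).hi e = c) ∧
    (c = (C.cell q).hi e ∨ ∃ r, C.Flush d e p q r) ∧
    ∀ t ∈ Set.Icc ((C.cell p).hi e) c, C.Covers d e ((C.cell p).hi d) t := by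
  have hq : ∀ t ∈ Set.Icc ((C.cell p).hi e) ((C.cell q).hi e),
      C.Covers d e ((C.cell p).hi d) t := fun t ht =>
    ⟨q, N.lo_eq ▸ (C.cell q).lo_mem_span d, N.lo_lt_hi.le.trans ht.1, ht.2⟩
  by_cases hr : ∃ r, C.Flush d e p q r
  · obtain ⟨r, hr⟩ := hr
    refine ⟨(C.cell r).hi e, hr.2 ▸ ((C.cell r).lo_lt_hi e).le, fun j hj => hj.eq N.perp hr ▸ rfl,
      .inr ⟨r, hr⟩, fun t ht => ?_⟩
    rcases le_total t ((C.cell q).hi e) with htq | htq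
    · exact hq t ⟨ht.1, htq⟩
    · exact ⟨r, hr.1 ▸ (C.cell r).lo_mem_span d, hr.2.trans_le htq, ht.2⟩
  · exact ⟨(C.cell q).hi e, le_rfl, fun r h => absurd ⟨r, h⟩ hr, .inl rfl, hq⟩

theorem hi_le_or_lt_lo (N : C.Notch d e p q) (hC : C.OrthoConvex)
    (hk : (C.cell k).lo d < (C.cell p).hi d) : (C.cell k).hi e ≤ (C.cell p).hi e ∨
      (C.cell q).hi e < (C.cell k).lo e ∧
        ∀ r, C.Flush d e p q r → (C.cell r).hi e < (C.cell k).lo e := by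
  obtain ⟨c, hqc, hrc, -, hside⟩ := N.exists_cap
  exact (hC.hi_le_or_lt_lo N.perp N.free (N.hi_lt_hi.trans_le hqc) hside hk).imp_right
    fun hck => ⟨hqc.trans_lt hck, fun r hr => (hrc r hr).trans_lt hck⟩

theorem flush_of_lo_eq (N : C.Notch d e p q) (hd : (C.cell k).lo d = (C.cell p).hi d)
    (hpk : (C.cell p).hi e ≤ (C.cell k).lo e) (hkq : (C.cell k).lo e ≤ (C.cell q).hi e) :
    C.Flush d e p q k := by
  have hqk : q ≠ k := by
    rintro rfl
    exact N.lo_lt_hi.not_ge hpk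
  have := C.separated N.perp hqk
  have := (C.cell k).lo_lt_hi
  have := (C.cell q).lo_lt_hi
  have := N.lo_eq
  have := N.lo_lt_hi
  exact ⟨hd, by grind⟩

open scoped Classical in
/-- The sides of the cells after filling the notch: `p` is raised to the level of `q`, and a flush
cell is prolonged to cover the raised `p`. -/
noncomputable def fillHi (C : RectComplex ι) (d e : Dir) (p q j : ι) (g : Dir) : ℝ :=
  if j = p ∧ g = e then (C.cell q).hi e
  else if C.Flush d e p q j ∧ g = d.neg then (C.cell p).hi d.neg
  else (C.cell j).hi g

theorem hi_le_fillHi (N : C.Notch d e p q) (j : ι) (g : Dir) :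
    (C.cell j).hi g ≤ fillHi C d e p q j g := by
  unfold fillHi
  split_ifs with hp hr
  · rw [hp.1, hp.2]
    exact N.hi_lt_hi.le
  · rw [hr.2, Rect.hi_neg, Rect.hi_neg, hr.1.1]
    exact neg_le_neg ((C.cell p).lo_lt_hi d).le
  · rfl

/-- The cells after filling the notch. -/
noncomputable def fillCell (N : C.Notch d e p q) (j : ι) : Rect :=
  (C.cell j).grow (fillHi C d e p q j) (N.hi_le_fillHi j)

theorem hi_fillCell (N : C.Notch d e p q) (j : ι) : (N.fillCell j).hi d = (C.cell j).hi d := by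
  rw [fillCell, Rect.hi_grow, fillHi, if_neg fun h => N.perp.1 h.2,
    if_neg fun h => d.neg_ne h.2.symm]

theorem lo_fillCell_perp (N : C.Notch d e p q) (j : ι) :
    (N.fillCell j).lo e = (C.cell j).lo e := by
  rw [fillCell, Rect.lo_grow, fillHi, if_neg fun h => e.neg_ne h.2,
    if_neg fun h => N.perp.neg_right.neg_left.1 h.2.symm, Rect.lo]

open scoped Classical in
theorem hi_fillCell_perp (N : C.Notch d e p q) (j : ι) :
    (N.fillCell j).hi e = if j = p then (C.cell q).hi e else (C.cell j).hi e := by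
  rw [fillCell, Rect.hi_grow, fillHi]
  simp [N.perp.neg_left.1.symm]

open scoped Classical in
theorem lo_fillCell (N : C.Notch d e p q) (j : ι) : (N.fillCell j).lo d =
    if C.Flush d e p q j then (C.cell p).lo d else (C.cell j).lo d := by
  rw [fillCell, Rect.lo_grow, fillHi]
  simp only [N.perp.neg_left.1, and_false, if_false, and_true]
  split_ifs <;> simp

theorem adjTo_of_fillCell (N : C.Notch d e p q) (hC : C.OrthoConvex)
    (h : (N.fillCell j).adjTo (N.fillCell k) d) : (C.cell j).adjTo (C.cell k) d := by
  rw [Rect.adjTo_iff N.perp, N.hi_fillCell, N.lo_fillCell, N.hi_fillCell_perp, N.hi_fillCell_perp,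
    N.lo_fillCell_perp, N.lo_fillCell_perp] at h
  rw [Rect.adjTo_iff N.perp]
  have hj := (C.cell j).lo_lt_hi
  have hp := (C.cell p).lo_lt_hi
  have hpq := N.hi_lt_hi
  have hclear := N.hi_le_or_lt_lo hC (k := j)
  by_cases hkr : C.Flush d e p q k
  · have := hkr.2
    grind
  · have hflush := N.flush_of_lo_eq (k := k)
    have := N.lo_lt_hi
    grind

theorem adj_fillCell_notch (N : C.Notch d e p q) (hC : C.OrthoConvex) (hk : p ≠ k)
    (htouch : ((N.fillCell p).toSet ∩ (N.fillCell k).toSet).Nonempty) :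
    (N.fillCell p).Adj (N.fillCell k) := by
  rw [Rect.toSet_inter_nonempty_iff N.perp] at htouch
  rw [Rect.adj_iff N.perp]
  simp only [Rect.adjTo_iff N.perp, Rect.adjTo_iff N.perp.symm, N.hi_fillCell, N.lo_fillCell,
    N.hi_fillCell_perp, N.lo_fillCell_perp, if_neg not_flush_self, if_neg hk.symm, if_true]
    at htouch ⊢
  have hp := (C.cell p).lo_lt_hi
  have hpq := N.hi_lt_hi
  have hkk := (C.cell k).lo_lt_hi
  by_cases hkr : C.Flush d e p q k
  · have := hkr.1
    have := hkr.2
    grind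
  have hold : (C.cell k).lo e ≤ (C.cell p).hi e := by
    have hflush := N.flush_of_lo_eq (k := k)
    have hclear := N.hi_le_or_lt_lo hC (k := k)
    grind
  have hadj := C.adj_of_touch N.perp hk (by grind) (by grind) htouch.2.1 hold
  have hfree := N.free k
  rw [Rect.adj_iff N.perp, Rect.adjTo_iff N.perp, Rect.adjTo_iff N.perp] at hadj
  rw [Rect.adjTo_iff N.perp.symm] at hadj hfree
  rw [Rect.adjTo_iff N.perp.symm] at hadj
  grind

theorem adj_fillCell_flush (N : C.Notch d e p q) (hC : C.OrthoConvex) (hr : C.Flush d e p q r)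
    (hkp : k ≠ p) (hrk : r ≠ k)
    (htouch : ((N.fillCell r).toSet ∩ (N.fillCell k).toSet).Nonempty) :
    (N.fillCell r).Adj (N.fillCell k) := by
  have hrp : r ≠ p := fun h => not_flush_self (h ▸ hr)
  have hkr : ¬ C.Flush d e p q k := fun hk => hrk (hr.eq N.perp hk)
  rw [Rect.toSet_inter_nonempty_iff N.perp] at htouch
  rw [Rect.adj_iff N.perp]
  simp only [Rect.adjTo_iff N.perp, Rect.adjTo_iff N.perp.symm, N.hi_fillCell, N.lo_fillCell,
    N.hi_fillCell_perp, N.lo_fillCell_perp, if_pos hr, if_neg hkr, if_neg hkp, if_neg hrp]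
    at htouch ⊢
  have hp := (C.cell p).lo_lt_hi
  have hpq := N.hi_lt_hi
  have hclear := N.hi_le_or_lt_lo hC (k := k)
  have hr₁ := hr.1
  have hr₂ := hr.2
  have hkk := (C.cell k).lo_lt_hi
  have hold : (C.cell p).hi d ≤ (C.cell k).hi d := by grind
  have hadj := C.adj_of_touch N.perp hrk (by grind) (by grind) htouch.2.1 htouch.2.2
  rw [Rect.adj_iff N.perp, Rect.adjTo_iff N.perp, Rect.adjTo_iff N.perp,
    Rect.adjTo_iff N.perp.symm, Rect.adjTo_iff N.perp.symm] at hadj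
  grind

theorem adj_fillCell (N : C.Notch d e p q) (hC : C.OrthoConvex) (hjk : j ≠ k)
    (htouch : ((N.fillCell j).toSet ∩ (N.fillCell k).toSet).Nonempty) :
    (N.fillCell j).Adj (N.fillCell k) := by
  have htouch' := Set.inter_comm _ _ ▸ htouch
  rcases eq_or_ne j p with rfl | hjp
  · exact N.adj_fillCell_notch hC hjk htouch
  rcases eq_or_ne k p with rfl | hkp
  · exact (N.adj_fillCell_notch hC hjk.symm htouch').symm
  by_cases hjr : C.Flush d e p q j
  · exact N.adj_fillCell_flush hC hjr hkp hjk htouch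
  by_cases hkr : C.Flush d e p q k
  · exact (N.adj_fillCell_flush hC hkr hjp hjk.symm htouch').symm
  have hcell : ∀ l, l ≠ p → ¬ C.Flush d e p q l → N.fillCell l = C.cell l := fun l hp hr =>
    Rect.grow_eq_self fun g => by rw [fillHi, if_neg (hp ·.1), if_neg (hr ·.1)]
  rw [hcell j hjp hjr, hcell k hkp hkr] at htouch ⊢
  exact (C.meet j k hjk).resolve_left (Set.not_disjoint_iff_nonempty_inter.2 htouch)

/-- The complex obtained by filling the notch. -/
noncomputable def fill (N : C.Notch d e p q) (hC : C.OrthoConvex) : RectComplex ι :=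
  ofTouching N.fillCell fun _ _ => N.adj_fillCell hC

theorem hi_fill (N : C.Notch d e p q) (hC : C.OrthoConvex) (j : ι) (g : Dir) :
    ((N.fill hC).cell j).hi g = fillHi C d e p q j g :=
  Rect.hi_grow _ (N.hi_le_fillHi j)

theorem free_of_flush (N : C.Notch d e p q) (hC : C.OrthoConvex) (hr : C.Flush d e p q r) :
    C.Free r d.neg := by
  intro k hk
  rw [Rect.adjTo_neg, Rect.adjTo_iff N.perp, hr.1, hr.2] at hk
  have hkp : (C.cell k).lo d < (C.cell p).hi d := hk.1 ▸ (C.cell k).lo_lt_hi d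
  rcases N.hi_le_or_lt_lo hC hkp with hle | ⟨-, hlt⟩
  · exact (hk.2.2.trans_le hle).not_gt N.hi_lt_hi
  · exact (hlt r hr).not_gt hk.2.1

theorem fill_extends (N : C.Notch d e p q) (hC : C.OrthoConvex) : (N.fill hC).Extends C := by
  refine extends_of_hi_le (fun j g => N.hi_fill hC j g ▸ N.hi_le_fillHi j g) fun j g hjg => ?_
  rw [hi_fill, fillHi, if_neg, if_neg]
  · rintro ⟨hr, rfl⟩
    exact hjg (N.free_of_flush hC hr)
  · rintro ⟨rfl, rfl⟩
    exact hjg N.free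

theorem hi_fill_mem_range (N : C.Notch d e p q) (hC : C.OrthoConvex) (j : ι) (g : Dir) :
    ((N.fill hC).cell j).hi g ∈ Set.range fun k => (C.cell k).hi g := by
  rw [hi_fill, fillHi]
  split_ifs with hp hr
  exacts [⟨q, by rw [hp.2]⟩, ⟨p, by rw [hr.2]⟩, ⟨j, rfl⟩]

theorem covers_fill_iff (N : C.Notch d e p q) (hC : C.OrthoConvex) {c : ℝ}
    (hqc : (C.cell q).hi e ≤ c) (hrc : ∀ r, C.Flush d e p q r → (C.cell r).hi e = c)
    (hc : c = (C.cell q).hi e ∨ ∃ r, C.Flush d e p q r) :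
    (N.fill hC).Covers d e s t ↔ C.Covers d e s t ∨
      s ∈ Set.Icc ((C.cell p).lo d) ((C.cell p).hi d) ∧ t ∈ Set.Icc ((C.cell p).hi e) c := by
  have hcell : ∀ j, s ∈ ((N.fill hC).cell j).span d ∧ t ∈ ((N.fill hC).cell j).span e ↔
      ((N.fillCell j).lo d ≤ s ∧ s ≤ (N.fillCell j).hi d) ∧
        (N.fillCell j).lo e ≤ t ∧ t ≤ (N.fillCell j).hi e := fun j => Iff.rfl
  simp only [Covers, hcell, N.hi_fillCell, N.lo_fillCell, N.hi_fillCell_perp, N.lo_fillCell_perp]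
  have hp := (C.cell p).lo_lt_hi d
  have hpq := N.hi_lt_hi
  constructor
  · rintro ⟨j, hs, ht⟩
    by_cases hj : s ∈ (C.cell j).span d ∧ t ∈ (C.cell j).span e
    · exact .inl ⟨j, hj⟩
    · simp only [Rect.span, Set.mem_Icc] at hj ⊢
      grind [Flush]
  · rintro (⟨j, hs, ht⟩ | ⟨hs, ht⟩)
    · refine ⟨j, ?_⟩
      simp only [Rect.span, Set.mem_Icc] at hs ht
      grind [Flush]
    · rcases le_or_gt t ((C.cell q).hi e) with htq | htq
      · have := (C.cell p).lo_lt_hi e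
        exact ⟨p, by grind [not_flush_self]⟩
      · obtain ⟨r, hr⟩ := hc.resolve_left (htq.trans_le ht.2).ne'
        have := hr.1
        have := (C.cell r).lo_lt_hi d
        have hrp : r ≠ p := fun h => not_flush_self (h ▸ hr)
        exact ⟨r, by grind [Flush]⟩

theorem fill_orthoConvex (N : C.Notch d e p q) (hC : C.OrthoConvex) :
    (N.fill hC).OrthoConvex := by
  obtain ⟨c, hqc, hrc, hc, hside⟩ := N.exists_cap
  have hglue := ((orthoConvex_iff N.perp).1 hC).glue hside fun s hs =>
    ⟨p, hs, (C.cell p).hi_mem_span e⟩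
  rw [orthoConvex_iff N.perp]
  convert hglue using 3
  exact N.covers_fill_iff hC hqc hrc hc

end Notch

/-- The invariants of repeatedly filling notches along sides facing `e` or `e.neg`, from `C` to
`C'`. The condition `hi_mem_range` confines the sides to finitely many lines, so that a maximal
such `C'` exists. -/
structure Grows (e : Dir) (C C' : RectComplex ι) : Prop where
  orthoConvex : C'.OrthoConvex
  preserves : C'.Extends C
  free : ∀ j g, g.Perp e → C.Free j g → C'.Free j g
  hi_mem_range : ∀ j g, (C'.cell j).hi g ∈ Set.range fun k => (C.cell k).hi g

/-- The complex has no notch along a side facing `e` or `e.neg`. -/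
def NotchFree (C : RectComplex ι) (e : Dir) : Prop :=
  ∀ d e' p q, d.Perp e → ¬ C.Notch d e' p q

theorem NotchFree.neg (hN : C.NotchFree e) : C.NotchFree e.neg := fun d e' p q h =>
  hN d e' p q (by simpa using h.neg_right)

theorem Grows.refl (hC : C.OrthoConvex) (e : Dir) : Grows e C C :=
  ⟨hC, fun _ _ _ h => h, fun _ _ _ h => h, fun j _ => ⟨j, rfl⟩⟩

theorem Grows.fill {e' : Dir} (hG : Grows e C C') (h : d.Perp e) (N : C'.Notch d e' p q) :
    Grows e C (N.fill hG.orthoConvex) where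
  orthoConvex := N.fill_orthoConvex _
  preserves j k g hjk := N.fill_extends _ j k g (hG.preserves j k g hjk)
  free j g hg hj k hjk := by
    have hfree := hG.free j g hg hj k
    rcases h.eq_or_eq_neg hg with rfl | rfl
    · exact hfree (N.adjTo_of_fillCell hG.orthoConvex hjk)
    · rw [Rect.adjTo_neg] at hjk hfree
      exact hfree (N.adjTo_of_fillCell hG.orthoConvex hjk)
  hi_mem_range j g := by
    obtain ⟨k, hk⟩ := N.hi_fill_mem_range hG.orthoConvex j g
    exact hk ▸ hG.hi_mem_range k g

theorem OrthoConvex.exists_grows_notchFree (hC : C.OrthoConvex) (e : Dir) :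
    ∃ C', Grows e C C' ∧ C'.NotchFree e := by
  let sides : RectComplex ι → ι → Dir → ℝ := fun C' j g => (C'.cell j).hi g
  have hfin : (sides '' {C' | Grows e C C'}).Finite := by
    have : Finite Dir := .of_surjective ![.left, .right, .top, .bottom] fun g => by
      cases g <;> [use 0; use 1; use 2; use 3] <;> rfl
    refine (Set.Finite.pi' fun _ => Set.Finite.pi' fun g =>
      Set.finite_range fun k => (C.cell k).hi g).subset ?_
    rintro _ ⟨C', hC', rfl⟩
    exact hC'.hi_mem_range
  obtain ⟨M, hM, hmax⟩ := Set.Finite.exists_maximalFor' sides _ hfin ⟨C, Grows.refl hC e⟩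
  refine ⟨M, hM, fun d e' p q h N => ?_⟩
  have hle : sides M ≤ sides (N.fill hM.orthoConvex) := fun j g =>
    (N.hi_le_fillHi j g).trans_eq (N.hi_fill hM.orthoConvex j g).symm
  have hp := hmax (hM.fill h N) hle p e'
  rw [show sides _ p e' = _ from N.hi_fill hM.orthoConvex p e', Notch.fillHi,
    if_pos ⟨rfl, rfl⟩] at hp
  exact hp.not_gt N.hi_lt_hi

theorem OrthoConvex.exists_hi_lt_hi_of_lo_lt (hC : C.OrthoConvex) (hN : C.NotchFree e)
    (h : d.Perp e) (hjk : (C.cell j).adjTo (C.cell k) d)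
    (hkt : (C.cell k).lo e < t) (htj : t ≤ (C.cell j).hi e) :
    ∃ l, t ∈ (C.cell l).span e ∧ (C.cell j).hi d < (C.cell l).hi d := by
  let K : Set ι := {k | (C.cell j).adjTo (C.cell k) d ∧ (C.cell k).lo e < t}
  obtain ⟨k, ⟨hjk, hkt⟩, hmax⟩ := K.exists_max_image (fun k => (C.cell k).hi e) K.toFinite
    ⟨k, hjk, hkt⟩
  obtain ⟨hd, hlo, -⟩ := (Rect.adjTo_iff h).1 hjk
  have hlt : (C.cell j).hi d < (C.cell k).hi d := hd.trans_lt ((C.cell k).lo_lt_hi d)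
  refine ⟨k, ⟨hkt.le, ?_⟩, hlt⟩
  by_contra! htk
  -- Otherwise `k` and `j` do not form a notch, so some cell stands on `k`, ...
  obtain ⟨f, hf⟩ : ∃ f, (C.cell k).adjTo (C.cell f) e := by
    by_contra! hfree
    exact hN d.neg e k j h.neg_left
      ⟨h.neg_left, hfree, (Rect.adjTo_neg _ _ d).2 hjk, htk.trans_le htj⟩
  obtain ⟨hkf, hdf, -⟩ := (Rect.adjTo_iff h.symm).1 hf
  -- ... and by convexity `j` has a `d`-neighbor just above `k`.
  obtain ⟨m, hkm, hm⟩ := exists_between (lt_min htk (hkf.trans_lt ((C.cell f).lo_lt_hi e)))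
  obtain ⟨hmt, hmf⟩ := lt_min_iff.1 hm
  obtain ⟨l, hjl, hml⟩ := hC.exists_neighbor h (hlo.trans hkm) (hmt.trans_le htj) (hd.trans_lt hdf)
    ⟨f, (C.cell f).hi_mem_span d, hkf ▸ hkm.le, hmf.le⟩
  exact (hmax l ⟨hjl, hml.1.trans_lt hmt⟩).not_gt (hkm.trans_le hml.2)

theorem OrthoConvex.exists_hi_lt_hi (hC : C.OrthoConvex) (hN : C.NotchFree e) (h : d.Perp e)
    (hj : ¬ C.Free j d) (ht : t ∈ (C.cell j).span e) :
    ∃ l, t ∈ (C.cell l).span e ∧ (C.cell j).hi d < (C.cell l).hi d := by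
  obtain ⟨k, hjk⟩ := not_forall_not.1 hj
  rcases ((C.cell k).lo_lt_hi e).gt_or_lt t with hkt | htk
  · exact hC.exists_hi_lt_hi_of_lo_lt hN h hjk hkt ht.2
  · obtain ⟨l, hl, hlt⟩ := hC.exists_hi_lt_hi_of_lo_lt hN.neg h.neg_right hjk (t := -t)
      (by rwa [Rect.lo_neg, neg_lt_neg_iff]) (by rw [Rect.hi_neg]; exact neg_le_neg ht.1)
    exact ⟨l, by rwa [Rect.mem_span_neg, neg_neg] at hl, hlt⟩

theorem OrthoConvex.exists_free (hC : C.OrthoConvex) (hN : C.NotchFree e) (h : d.Perp e)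
    (ht : t ∈ (C.cell j).span e) : ∃ k, t ∈ (C.cell k).span e ∧ C.Free k d := by
  let K : Set ι := {k | t ∈ (C.cell k).span e}
  obtain ⟨k, hk, hmax⟩ := K.exists_max_image (fun k => (C.cell k).hi d) K.toFinite ⟨j, ht⟩
  refine ⟨k, hk, ?_⟩
  by_contra hfree
  obtain ⟨l, hl, hlt⟩ := hC.exists_hi_lt_hi hN h hfree hk
  exact (hmax l hl).not_gt hlt

/-! ### Stretching to the bounding box -/

/-- The coordinate of the side of the bounding box facing `d`. -/
noncomputable def extent (C : RectComplex ι) (d : Dir) : ℝ := ⨆ j, (C.cell j).hi d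

open scoped Classical in
/-- The first level at or beyond `u` in direction `e` from which some cell continues further in
direction `e`, or the end of the bounding box if there is none. -/
noncomputable def ceiling (C : RectComplex ι) (e : Dir) (u : ℝ) : ℝ :=
  ⨅ k, if u < (C.cell k).hi e then max u ((C.cell k).lo e) else C.extent e

theorem hi_le_extent (C : RectComplex ι) (j : ι) (d : Dir) : (C.cell j).hi d ≤ C.extent d :=
  le_ciSup (f := fun k => (C.cell k).hi d) (Set.finite_range _).bddAbove j

theorem ceiling_le {u : ℝ} (hk : u < (C.cell k).hi e) :
    C.ceiling e u ≤ max u ((C.cell k).lo e) :=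
  (ciInf_le (Set.finite_range _).bddBelow k).trans_eq (if_pos hk)

theorem ceiling_le_extent [Nonempty ι] (C : RectComplex ι) (e : Dir) (u : ℝ) :
    C.ceiling e u ≤ C.extent e := by
  obtain ⟨k⟩ := ‹Nonempty ι›
  refine (ciInf_le (Set.finite_range _).bddBelow k).trans ?_
  split_ifs with hk
  · exact (max_le hk.le ((C.cell k).lo_lt_hi e).le).trans (C.hi_le_extent k e)
  · rfl

theorem le_ceiling [Nonempty ι] {u x : ℝ} (hx : x ≤ C.extent e)
    (h : ∀ k, u < (C.cell k).hi e → x ≤ max u ((C.cell k).lo e)) : x ≤ C.ceiling e u :=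
  le_ciInf fun k => by split_ifs with hk; exacts [h k hk, hx]

open scoped Classical in
/-- The sides of the cells after stretching: the `e`-side is moved up to the next level where a cell
begins, and free sides perpendicular to `e` are moved to the bounding box. -/
noncomputable def stretchHi (C : RectComplex ι) (e : Dir) (j : ι) (g : Dir) : ℝ :=
  if g = e then C.ceiling e ((C.cell j).hi e)
  else if g ≠ e.neg ∧ C.Free j g then C.extent g
  else (C.cell j).hi g

theorem hi_le_stretchHi (C : RectComplex ι) (e : Dir) (j : ι) (g : Dir) :
    (C.cell j).hi g ≤ C.stretchHi e j g := by
  have : Nonempty ι := ⟨j⟩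
  unfold stretchHi
  split_ifs with hg
  · exact hg ▸ le_ceiling (C.hi_le_extent j g) fun k _ => le_max_left _ _
  · exact C.hi_le_extent j g
  · rfl

theorem stretchHi_le_extent (C : RectComplex ι) (e : Dir) (j : ι) (g : Dir) :
    C.stretchHi e j g ≤ C.extent g := by
  have : Nonempty ι := ⟨j⟩
  unfold stretchHi
  split_ifs with hg
  exacts [hg ▸ C.ceiling_le_extent _ _, le_rfl, C.hi_le_extent j g]

theorem stretchHi_of_free (h : d.Perp e) (hj : C.Free j d) : C.stretchHi e j d = C.extent d := by
  rw [stretchHi, if_neg h.1, if_pos ⟨h.2, hj⟩]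

theorem stretchHi_of_not_free (hj : ¬ C.Free j d) : C.stretchHi e j d = (C.cell j).hi d := by
  refine le_antisymm ?_ (C.hi_le_stretchHi e j d)
  rw [stretchHi]
  split_ifs with hd hfree
  · obtain ⟨k, hk⟩ := not_forall_not.1 hj
    obtain ⟨g, hg⟩ := d.exists_perp
    have hjk := ((Rect.adjTo_iff hg).1 hk).1
    subst hd
    exact (ceiling_le (hjk.trans_lt ((C.cell k).lo_lt_hi d))).trans_eq (by rw [hjk, max_self])
  · exact absurd hfree.2 hj
  · rfl

/-- The cells after stretching. -/
noncomputable def stretchCell (C : RectComplex ι) (e : Dir) (j : ι) : Rect :=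
  (C.cell j).grow (C.stretchHi e j) (C.hi_le_stretchHi e j)

theorem hi_stretchCell (C : RectComplex ι) (e : Dir) (j : ι) (g : Dir) :
    (C.stretchCell e j).hi g = C.stretchHi e j g := Rect.hi_grow _ _

theorem lo_stretchCell (C : RectComplex ι) (e : Dir) (j : ι) (g : Dir) :
    (C.stretchCell e j).lo g = -C.stretchHi e j g.neg := Rect.lo_grow _ _

theorem hi_stretchCell_self (C : RectComplex ι) (e : Dir) (j : ι) :
    (C.stretchCell e j).hi e = C.ceiling e ((C.cell j).hi e) := by
  rw [hi_stretchCell, stretchHi, if_pos rfl]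

theorem lo_stretchCell_self (C : RectComplex ι) (e : Dir) (j : ι) :
    (C.stretchCell e j).lo e = (C.cell j).lo e := by
  rw [lo_stretchCell, stretchHi, if_neg e.neg_ne, if_neg fun h => h.1 rfl, Rect.lo]

theorem OrthoConvex.adjTo_stretchCell_of_le (hC : C.OrthoConvex) (h : d.Perp e)
    (hjk : (C.cell j).lo e < (C.cell k).hi e) (hkj : (C.cell k).lo e < (C.cell j).hi e)
    (hd : (C.cell j).hi d ≤ (C.cell k).lo d)
    (htouch : (C.stretchCell e k).lo d ≤ (C.stretchCell e j).hi d) :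
    (C.stretchCell e j).adjTo (C.stretchCell e k) d := by
  have hlt : ∀ l, (C.cell l).lo e < (C.cell l).hi e := fun l => (C.cell l).lo_lt_hi e
  obtain ⟨t, hlo, hhi⟩ := exists_between (max_lt (lt_min (hlt j) hjk) (lt_min hkj (hlt k)))
  obtain ⟨hjt, hkt⟩ := max_lt_iff.1 hlo
  obtain ⟨htj, htk⟩ := lt_min_iff.1 hhi
  have hj : ¬ C.Free j d := fun hfree => by
    obtain ⟨l, hl, -⟩ := hC.exists_neighbor h hjt htj (hd.trans_lt ((C.cell k).lo_lt_hi d))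
      ⟨k, (C.cell k).hi_mem_span d, hkt.le, htk.le⟩
    exact hfree l hl
  have hk : ¬ C.Free k d.neg := fun hfree => by
    obtain ⟨l, hl, -⟩ := hC.exists_neighbor h.neg_left hkt htk (w := -(C.cell j).lo d)
      (by rw [Rect.hi_neg]; exact neg_lt_neg (((C.cell j).lo_lt_hi d).trans_le hd))
      (covers_neg_left.2 ⟨j, by rw [neg_neg]; exact (C.cell j).lo_mem_span d, hjt.le, htj.le⟩)
    exact hfree l hl
  rw [hi_stretchCell, lo_stretchCell, stretchHi_of_not_free hj, stretchHi_of_not_free hk,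
    Rect.hi_neg, neg_neg] at htouch
  have htop : ∀ l, (C.cell l).hi e ≤ (C.stretchCell e l).hi e := fun l =>
    (C.hi_le_stretchHi e l e).trans_eq (C.hi_stretchCell e l e).symm
  rw [Rect.adjTo_iff h, lo_stretchCell_self, lo_stretchCell_self, hi_stretchCell, lo_stretchCell,
    stretchHi_of_not_free hj, stretchHi_of_not_free hk, Rect.hi_neg, neg_neg]
  exact ⟨hd.antisymm htouch, hjk.trans_le (htop k), hkj.trans_le (htop j)⟩

theorem OrthoConvex.lo_stretchCell_lt_hi (hC : C.OrthoConvex) (h : d.Perp e)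
    (hjk : (C.cell j).hi e ≤ (C.cell k).lo e)
    (hceil : (C.cell k).lo e ≤ C.ceiling e ((C.cell j).hi e))
    (htouch : (C.stretchCell e j).lo d ≤ (C.stretchCell e k).hi d) :
    (C.stretchCell e j).lo d < (C.stretchCell e k).hi d := by
  have hj := (C.stretchCell e j).lo_lt_hi d
  have hk := (C.stretchCell e k).lo_lt_hi d
  refine htouch.lt_of_ne fun heq => ?_
  have hkfree : ¬ C.Free k d := fun hfree => by
    rw [heq, hi_stretchCell, hi_stretchCell, stretchHi_of_free h hfree] at hj
    exact hj.not_ge (C.stretchHi_le_extent e j d)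
  have hjfree : ¬ C.Free j d.neg := fun hfree => by
    rw [← heq, lo_stretchCell, lo_stretchCell, stretchHi_of_free h.neg_left hfree] at hk
    exact hk.not_ge (neg_le_neg (C.stretchHi_le_extent e k d.neg))
  rw [hi_stretchCell, lo_stretchCell, stretchHi_of_not_free hkfree, stretchHi_of_not_free hjfree,
    Rect.hi_neg, neg_neg] at heq
  have hjd := (C.cell j).lo_lt_hi d
  have hkd := (C.cell k).lo_lt_hi d
  have hje := (C.cell j).lo_lt_hi e
  have hke := (C.cell k).lo_lt_hi e
  -- The original cells would touch only in a corner, or else convexity provides a cell in the gap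
  -- between them, which contradicts the height of the ceiling.
  rcases hjk.eq_or_lt with hcorner | hgap
  · have hadj := C.adj_of_touch h (fun hjk' : j = k => by subst hjk'; linarith) heq.le
      (by linarith) (by linarith) hcorner.ge
    rw [Rect.adj_iff h, Rect.adjTo_iff h, Rect.adjTo_iff h, Rect.adjTo_iff h.symm,
      Rect.adjTo_iff h.symm] at hadj
    grind
  · obtain ⟨m, hjm, hmk⟩ := exists_between hgap
    obtain ⟨l, -, hlm⟩ := (((orthoConvex_iff h).1 hC).2 ((C.cell j).lo d)).out
      ⟨j, (C.cell j).lo_mem_span d, (C.cell j).hi_mem_span e⟩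
      ⟨k, heq ▸ (C.cell k).hi_mem_span d, (C.cell k).lo_mem_span e⟩ ⟨hjm.le, hmk.le⟩
    have hceil' := ceiling_le (hjm.trans_le hlm.2)
    exact (hceil.trans hceil').not_gt (max_lt hgap (hlm.1.trans_lt hmk))

theorem OrthoConvex.adjTo_stretchCell_of_stacked (hC : C.OrthoConvex) (h : d.Perp e)
    (hjk : (C.cell j).hi e ≤ (C.cell k).lo e)
    (htouch : ((C.stretchCell e j).toSet ∩ (C.stretchCell e k).toSet).Nonempty) :
    (C.stretchCell e j).adjTo (C.stretchCell e k) e := by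
  obtain ⟨⟨h₁, h₂⟩, -, hkj⟩ := (Rect.toSet_inter_nonempty_iff h).1 htouch
  rw [lo_stretchCell_self, hi_stretchCell_self] at hkj
  have hceil := ceiling_le (hjk.trans_lt ((C.cell k).lo_lt_hi e))
  rw [max_eq_right hjk] at hceil
  have h₁' := hC.lo_stretchCell_lt_hi h hjk hkj h₁
  have h₂' := hC.lo_stretchCell_lt_hi h.neg_left hjk hkj (by simpa using h₂)
  rw [Rect.lo_neg, Rect.hi_neg, neg_lt_neg_iff] at h₂'
  rw [Rect.adjTo_iff h.symm, hi_stretchCell_self, lo_stretchCell_self]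
  exact ⟨hceil.antisymm hkj, h₁', h₂'⟩

theorem OrthoConvex.adj_stretchCell (hC : C.OrthoConvex) (e : Dir) (hjk : j ≠ k)
    (htouch : ((C.stretchCell e j).toSet ∩ (C.stretchCell e k).toSet).Nonempty) :
    (C.stretchCell e j).Adj (C.stretchCell e k) := by
  obtain ⟨d, hd⟩ := e.exists_perp
  have h := hd.symm
  by_cases hj : (C.cell j).hi e ≤ (C.cell k).lo e
  · exact ⟨e, hC.adjTo_stretchCell_of_stacked h hj htouch⟩
  by_cases hk : (C.cell k).hi e ≤ (C.cell j).lo e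
  · exact .symm ⟨e, hC.adjTo_stretchCell_of_stacked h hk (Set.inter_comm _ _ ▸ htouch)⟩
  rw [not_le] at hj hk
  obtain ⟨⟨h₁, h₂⟩, -⟩ := (Rect.toSet_inter_nonempty_iff h).1 htouch
  rcases C.separated h hjk with hd | hd | hd | hd
  · exact ⟨d, hC.adjTo_stretchCell_of_le h hk hj hd h₂⟩
  · exact .symm ⟨d, hC.adjTo_stretchCell_of_le h hj hk hd h₁⟩
  · exact absurd hj hd.not_gt
  · exact absurd hk hd.not_gt

/-- The complex obtained by stretching all cells along the axis of `e`, and free sides perpendicular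
to `e` to the bounding box. -/
noncomputable def stretch (C : RectComplex ι) (hC : C.OrthoConvex) (e : Dir) : RectComplex ι :=
  ofTouching (C.stretchCell e) fun _ _ => hC.adj_stretchCell e

theorem stretch_extends (hC : C.OrthoConvex) (e : Dir) : (C.stretch hC e).Extends C :=
  extends_of_hi_le (fun j g => (C.hi_le_stretchHi e j g).trans_eq (C.hi_stretchCell e j g).symm)
    fun j g hj => (C.hi_stretchCell e j g).trans (stretchHi_of_not_free hj)

theorem stretch_extreme (hC : C.OrthoConvex) (h : d.Perp e) (hi : C.Free i d) :
    (C.stretch hC e).Extreme i d :=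
  extreme_iff.2 fun j => by
    change (C.stretchCell e j).hi d ≤ (C.stretchCell e i).hi d
    rw [hi_stretchCell, hi_stretchCell, stretchHi_of_free h hi]
    exact C.stretchHi_le_extent e j d

theorem OrthoConvex.exists_mem_span_stretchCell (hC : C.OrthoConvex) (hN : C.NotchFree e)
    (h : d.Perp e) (hs : s ∈ Set.Icc (-C.extent d.neg) (C.extent d))
    (ht : t ∈ (C.cell j).span e) :
    ∃ k, t ∈ (C.cell k).span e ∧ s ∈ (C.stretchCell e k).span d := by
  obtain ⟨a, hat, ha⟩ := hC.exists_free hN h.neg_left ht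
  obtain ⟨b, hbt, hb⟩ := hC.exists_free hN h ht
  have hspan : ∀ k, (C.cell k).span d ⊆ (C.stretchCell e k).span d := fun k => by
    refine Set.Icc_subset_Icc ?_ ((C.hi_le_stretchHi e k d).trans_eq (C.hi_stretchCell e k d).symm)
    exact (C.lo_stretchCell e k d).trans_le (neg_le_neg (C.hi_le_stretchHi e k d.neg))
  rcases le_or_gt s ((C.cell a).hi d) with hsa | hsa
  · refine ⟨a, hat, ?_, hsa.trans (hspan a ((C.cell a).hi_mem_span d)).2⟩
    rw [lo_stretchCell, stretchHi_of_free h.neg_left ha]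
    exact hs.1
  rcases le_or_gt ((C.cell b).lo d) s with hsb | hsb
  · refine ⟨b, hbt, (hspan b ((C.cell b).lo_mem_span d)).1.trans hsb, ?_⟩
    rw [hi_stretchCell, stretchHi_of_free h hb]
    exact hs.2
  obtain ⟨k, hks, hkt⟩ := (((orthoConvex_iff h).1 hC).1 t).out
    ⟨a, (C.cell a).hi_mem_span d, hat⟩ ⟨b, (C.cell b).lo_mem_span d, hbt⟩ ⟨hsa.le, hsb.le⟩
  exact ⟨k, hkt, hspan k hks⟩

theorem exists_le_ceiling [Nonempty ι] (ht : t ∈ Set.Icc (-C.extent e.neg) (C.extent e))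
    (hgap : ∀ j, t ∉ (C.cell j).span e) :
    ∃ j, ∀ k, (C.cell j).hi e ∈ (C.cell k).span e →
      (C.cell k).lo e ≤ t ∧ t ≤ C.ceiling e ((C.cell k).hi e) := by
  let K : Set ι := {k | (C.cell k).hi e ≤ t}
  have hK : ∀ k, k ∈ K ∨ t < (C.cell k).lo e := fun k => by
    by_contra! hk
    exact hgap k ⟨hk.2, (not_le.1 hk.1).le⟩
  obtain ⟨b, hb⟩ := exists_eq_ciSup_of_finite (f := fun j => (C.cell j).hi e.neg)
  have hbK : b ∈ K := (hK b).resolve_right fun hlt => ht.1.not_gt <| by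
    rw [extent, ← hb, Rect.hi_neg, neg_neg]
    exact hlt
  obtain ⟨j, hj, hmax⟩ := K.exists_max_image (fun k => (C.cell k).hi e) K.toFinite ⟨b, hbK⟩
  refine ⟨j, fun k hk => ⟨hk.1.trans hj, le_ceiling ht.2 fun l hl => ?_⟩⟩
  rcases hK l with hlK | hlt
  · exact absurd (hk.2.trans_lt hl) (hmax l hlK).not_gt
  · exact hlt.le.trans (le_max_right _ _)

theorem OrthoConvex.stretch_isRectangular (hC : C.OrthoConvex) (hN : C.NotchFree e) (i : ι) :
    (C.stretch hC e).IsRectangular := by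
  have : Nonempty ι := ⟨i⟩
  obtain ⟨d, hd⟩ := e.exists_perp
  refine ⟨(C.cell i).grow C.extent (C.hi_le_extent i), union_eq_of_covers_iff hd.symm fun s t => ?_⟩
  simp only [Rect.span, Rect.hi_grow, Rect.lo_grow]
  have hsub : ∀ j g, (C.stretchCell e j).span g ⊆ Set.Icc (-C.extent g.neg) (C.extent g) :=
    fun j g => Set.Icc_subset_Icc
      ((neg_le_neg (C.stretchHi_le_extent e j g.neg)).trans_eq (C.lo_stretchCell e j g).symm)
      ((C.hi_stretchCell e j g).trans_le (C.stretchHi_le_extent e j g))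
  refine ⟨fun ⟨j, hs, ht⟩ => ⟨hsub j d hs, hsub j e ht⟩, fun ⟨hs, ht⟩ => ?_⟩
  have hself : ∀ j, t ∈ (C.stretchCell e j).span e ↔
      (C.cell j).lo e ≤ t ∧ t ≤ C.ceiling e ((C.cell j).hi e) := fun j => by
    rw [Rect.span, lo_stretchCell_self, hi_stretchCell_self, Set.mem_Icc]
  by_cases hrow : ∃ j, t ∈ (C.cell j).span e
  · obtain ⟨j, hj⟩ := hrow
    obtain ⟨k, hkt, hks⟩ := hC.exists_mem_span_stretchCell hN hd.symm hs hj
    refine ⟨k, hks, (hself k).2 ⟨hkt.1, hkt.2.trans ?_⟩⟩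
    exact le_ceiling (C.hi_le_extent k e) fun _ _ => le_max_left _ _
  · obtain ⟨j, hj⟩ := exists_le_ceiling ht (not_exists.1 hrow)
    obtain ⟨k, hkt, hks⟩ :=
      hC.exists_mem_span_stretchCell hN hd.symm hs ((C.cell j).hi_mem_span e)
    exact ⟨k, hks, (hself k).2 (hj k hkt)⟩

theorem Extensible.free (hE : C.Extensible i d) : C.Free i d := by
  obtain ⟨C', ⟨hext, -⟩, hextreme⟩ := hE
  intro j hij
  obtain ⟨e, h⟩ := d.exists_perp
  have hij' := ((Rect.adjTo_iff h).1 (hext i j d hij)).1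
  exact (extreme_iff.1 hextreme j).not_gt (hij'.trans_lt ((C'.cell j).lo_lt_hi d))

theorem OrthoConvex.extensible_of_free (hC : C.OrthoConvex) (hi : C.Free i d) :
    C.Extensible i d := by
  obtain ⟨e, h⟩ := d.exists_perp
  obtain ⟨C', hG, hN⟩ := hC.exists_grows_notchFree e
  refine ⟨C'.stretch hG.orthoConvex e, ⟨fun j k g hjk => ?_, ?_⟩, ?_⟩
  · exact stretch_extends hG.orthoConvex e j k g (hG.preserves j k g hjk)
  · exact hG.orthoConvex.stretch_isRectangular hN i
  · exact stretch_extreme hG.orthoConvex h (hG.free i d h hi)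

end RectComplex

/-- In an orthogonally convex rectangle complex, a cell `i` is
`d`-extensible if and only if no cell of the complex is adjacent to it on its `d`-side. -/
theorem extensible_iff_no_neighbor {ι : Type} [Fintype ι] (C : RectComplex ι)
    (hconv : C.OrthoConvex) (i : ι) (d : Dir) :
    C.Extensible i d ↔ ¬ ∃ j : ι, j ≠ i ∧ (C.cell i).adjTo (C.cell j) d := by
  refine ⟨fun hE ⟨j, _, hij⟩ => hE.free j hij, fun hno => hconv.extensible_of_free fun j hij => ?_⟩
  exact hno ⟨j, (RectComplex.ne_of_adjTo hij).symm, hij⟩
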